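/- Disintegrated kl and McAllester-type bounds with the positive-part log ratio: For any probability measure D on Z, any loss ℓ : H × Z → [0,1], any prior density P on H, any posterior Markov kernel S ↦ Q_S with strictly positive densities, and any δ ∈ (0,1], each of the following holds with probability at least 1−δ over S ∼ D^m and h ∼ Q_S: (i) kl(R_S^ℓ(h) ‖ R_D^ℓ(h)) ≤ (1/m)·[ ln₊(Q_S(h)/P(h)) + ln(2√m/δ) ]; (ii) |R_S^ℓ(h) − R_D^ℓ(h)| ≤ √( (1/(2m))·[ ln₊(Q_S(h)/P(h)) + ln(2√m/δ) ] ). -/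

import Mathlib

open MeasureTheory ProbabilityTheory

/-- The true risk `R_D^ℓ(h) = E_{z∼D} ℓ(h,z)`. -/
noncomputable def trueRisk {H Z : Type*} [MeasurableSpace Z]
    (D : Measure Z) (ℓ : H → Z → ℝ) (h : H) : ℝ :=
  ∫ z, ℓ h z ∂D

/-- The empirical risk `R_S^ℓ(h) = (1/m) Σ_{i=1}^m ℓ(h,z_i)`. -/
noncomputable def empRisk {H Z : Type*} {m : ℕ}
    (ℓ : H → Z → ℝ) (h : H) (S : Fin m → Z) : ℝ :=
  (∑ i, ℓ h (S i)) / m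

/-- The binary KL divergence `kl(q‖p) = q ln(q/p) + (1−q) ln((1−q)/(1−p))`. -/
noncomputable def binKL (q p : ℝ) : ℝ :=
  q * Real.log (q / p) + (1 - q) * Real.log ((1 - q) / (1 - p))

theorem abel_aux_zero (n : ℕ) :
    ∑ k ∈ Finset.range (n+1), (n.choose k : ℝ) * (k:ℝ)^k * ((0:ℝ) - k)^(n-k) = n.factorial := by
  have h := congrFun (fwdDiff_iter_eq_factorial (R := ℝ) (n := n)) 0
  rw [fwdDiff_iter_eq_sum_shift] at h
  simp only [Pi.natCast_apply] at h
  rw [← h]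
  refine Finset.sum_congr rfl fun k hk => ?_
  have hk' : k ≤ n := by simpa [Nat.lt_succ_iff] using hk
  have : (k:ℝ)^n = (k:ℝ)^k * (k:ℝ)^(n-k) := by rw [← pow_add]; congr 1; omega
  simp [zsmul_eq_mul, this]
  rw [neg_pow (k:ℝ)]
  ring

theorem abel_identity (n : ℕ) : ∀ y : ℝ,
    ∑ k ∈ Finset.range (n+1), (n.choose k : ℝ) * (k:ℝ)^k * (y - k)^(n-k)
      = ∑ k ∈ Finset.range (n+1), (n.descFactorial k : ℝ) * y^(n-k) := by
  induction n with
  | zero => intro y; simp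
  | succ n ih =>
    have hF : ∀ y : ℝ, HasDerivAt (fun y : ℝ => ∑ k ∈ Finset.range (n+1+1),
        ((n+1).choose k : ℝ) * (k:ℝ)^k * (y - k)^(n+1-k))
        (∑ k ∈ Finset.range (n+1+1), ((n+1).choose k : ℝ) * (k:ℝ)^k *
          (((n+1-k : ℕ) : ℝ) * (y - k)^(n+1-k-1) * 1)) y := by
      intro y
      apply HasDerivAt.fun_sum
      intro k _
      exact (((hasDerivAt_id y).sub_const (k:ℝ)).fun_pow (n+1-k)).const_mul _
    have hG : ∀ y : ℝ, HasDerivAt (fun y : ℝ => ∑ k ∈ Finset.range (n+1+1),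
        ((n+1).descFactorial k : ℝ) * y^(n+1-k))
        (∑ k ∈ Finset.range (n+1+1), ((n+1).descFactorial k : ℝ) *
          (((n+1-k : ℕ) : ℝ) * y^(n+1-k-1) * 1)) y := by
      intro y
      apply HasDerivAt.fun_sum
      intro k _
      exact ((hasDerivAt_id y).fun_pow (n+1-k)).const_mul _
    have hFG : ∀ y : ℝ, (∑ k ∈ Finset.range (n+1+1), ((n+1).choose k : ℝ) * (k:ℝ)^k *
          (((n+1-k : ℕ) : ℝ) * (y - k)^(n+1-k-1) * 1)) =
        (∑ k ∈ Finset.range (n+1+1), ((n+1).descFactorial k : ℝ) *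
          (((n+1-k : ℕ) : ℝ) * y^(n+1-k-1) * 1)) := by
      intro y
      rw [Finset.sum_range_succ, Finset.sum_range_succ _ (n+1)]
      simp only [Nat.sub_self, Nat.cast_zero, zero_mul, mul_zero, add_zero]
      have h1 : ∀ k ∈ Finset.range (n+1), ((n+1).choose k : ℝ) * (k:ℝ)^k *
          (((n+1-k : ℕ) : ℝ) * (y - k)^(n+1-k-1) * 1) =
          ((n:ℝ)+1) * ((n.choose k : ℝ) * (k:ℝ)^k * (y - k)^(n-k)) := by
        intro k hk
        have h := Nat.choose_mul_succ_eq n k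
        have h' : (n.choose k : ℝ) * (n+1) = ((n+1).choose k : ℝ) * ((n+1-k : ℕ):ℝ) := by
          exact_mod_cast h
        have e : n + 1 - k - 1 = n - k := by omega
        rw [e]
        linear_combination (-(k:ℝ)^k * (y-k)^(n-k)) * h'
      have h2 : ∀ k ∈ Finset.range (n+1), ((n+1).descFactorial k : ℝ) *
          (((n+1-k : ℕ) : ℝ) * y^(n+1-k-1) * 1) =
          ((n:ℝ)+1) * ((n.descFactorial k : ℝ) * y^(n-k)) := by
        intro k hk
        have h := Nat.succ_descFactorial_succ n k
        rw [Nat.descFactorial_succ] at h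
        have h' : ((n+1-k : ℕ):ℝ) * ((n+1).descFactorial k : ℝ) = (n+1) * (n.descFactorial k : ℝ) := by
          exact_mod_cast h
        have e : n + 1 - k - 1 = n - k := by omega
        rw [e]
        linear_combination (y^(n-k)) * h'
      rw [Finset.sum_congr rfl h1, Finset.sum_congr rfl h2, ← Finset.mul_sum, ← Finset.mul_sum, ih]
    intro y
    have hd : ∀ y : ℝ, HasDerivAt (fun y : ℝ => (∑ k ∈ Finset.range (n+1+1),
        ((n+1).choose k : ℝ) * (k:ℝ)^k * (y - k)^(n+1-k)) - ∑ k ∈ Finset.range (n+1+1),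
        ((n+1).descFactorial k : ℝ) * y^(n+1-k)) 0 y := by
      intro y
      have := (hF y).fun_sub (hG y)
      rwa [hFG, sub_self] at this
    have hc := is_const_of_deriv_eq_zero (fun y => (hd y).differentiableAt)
      (fun y => (hd y).deriv) y 0
    rw [abel_aux_zero] at hc
    have hz : ∑ k ∈ Finset.range (n+1+1), ((n+1).descFactorial k : ℝ) * (0:ℝ)^(n+1-k)
        = (n+1).factorial := by
      rw [Finset.sum_range_succ, Finset.sum_eq_zero]
      · rw [Nat.descFactorial_self, Nat.sub_self]; simp
      · intro k hk
        have : n + 1 - k ≠ 0 := by have := Finset.mem_range.1 hk; omega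
        simp [this]
    rw [hz] at hc
    linarith

theorem desc_sum_le (m : ℕ) (hm : 0 < m) (a : ℕ → ℝ) (ha0 : a 0 = 1)
    (ha : ∀ k, a (k+1) = a k * (1 - k / m)) :
    ∑ k ∈ Finset.range (m+1), a k ≤ 2 * Real.sqrt m := by
  have hm' : (0:ℝ) < m := by exact_mod_cast hm
  rcases Nat.lt_or_ge m 2 with h1 | h2
  · have : m = 1 := by omega
    subst this
    have := ha 0
    simp [Finset.sum_range_succ, ha0] at this ⊢
    linarith
  have hnn : ∀ k, k ≤ m + 1 → 0 ≤ a k := by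
    intro k
    induction k with
    | zero => intro _; rw [ha0]; norm_num
    | succ k ih =>
      intro hk
      rw [ha]
      refine mul_nonneg (ih (by omega)) ?_
      rw [sub_nonneg, div_le_one hm']
      exact_mod_cast (by omega : k ≤ m)
  have hstep : ∀ k, k ≤ m → a (k+1) ≤ a k := by
    intro k hk
    rw [ha]
    have := hnn k (by omega)
    have : 0 ≤ (k:ℝ) / m := by positivity
    nlinarith
  have ha2 : a 2 = 1 - 1/m := by
    have e1 := ha 0
    have e2 := ha 1
    simp [ha0] at e1 e2
    rw [e2, e1]; simp
  have hle1 : ∀ k, k ≤ m + 1 → a k ≤ 1 := by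
    intro k
    induction k with
    | zero => intro _; rw [ha0]
    | succ k ih => intro hk; exact (hstep k (by omega)).trans (ih (by omega))
  have hle2 : ∀ k, 2 ≤ k → k ≤ m + 1 → a k ≤ 1 - 1/m := by
    intro k hk
    induction k, hk using Nat.le_induction with
    | base => intro _; rw [ha2]
    | succ k hk ih => intro hk; exact (hstep k (by omega)).trans (ih (by omega))
  have htel : ∀ K n : ℕ, K ≤ n → ∑ k ∈ Finset.Ico K n, (k:ℝ) * a k = m * (a K - a n) := by
    intro K n hKn
    induction n, hKn using Nat.le_induction with
    | base => simp
    | succ n hn ih =>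
      rw [Finset.sum_Ico_succ_top hn, ih, ha n]
      field_simp
      ring
  set s := Real.sqrt m with hs
  have hss : s * s = m := Real.mul_self_sqrt hm'.le
  have hs1 : 1 < s := by rw [hs, Real.lt_sqrt] <;> norm_num; omega
  obtain ⟨K, hK⟩ : ∃ K, K = ⌈s⌉₊ := ⟨_, rfl⟩
  have hK1 : s ≤ K := hK ▸ Nat.le_ceil s
  have hK2 : (K:ℝ) < s + 1 := hK ▸ Nat.ceil_lt_add_one (by linarith)
  have hK3 : 2 ≤ K := by
    have : (1:ℝ) < K := by linarith
    exact_mod_cast this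
  have hKm : K ≤ m := by
    rw [hK, Nat.ceil_le]; nlinarith
  have hKpos : (0:ℝ) < K := by linarith
  rw [← Finset.sum_range_add_sum_Ico _ (by omega : K ≤ m+1)]
  have A : ∑ k ∈ Finset.range K, a k ≤ K := by
    calc _ ≤ ∑ k ∈ Finset.range K, (1:ℝ) := Finset.sum_le_sum fun k hk =>
            hle1 k (by have := Finset.mem_range.1 hk; omega)
      _ = K := by simp
  have B : K * ∑ k ∈ Finset.Ico K (m+1), a k ≤ m - 1 := by
    calc K * ∑ k ∈ Finset.Ico K (m+1), a k ≤ ∑ k ∈ Finset.Ico K (m+1), (k:ℝ) * a k := by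
            rw [Finset.mul_sum]
            refine Finset.sum_le_sum fun k hk => ?_
            have := Finset.mem_Ico.1 hk
            exact mul_le_mul_of_nonneg_right (by exact_mod_cast this.1) (hnn k (by omega))
      _ = m * (a K - a (m+1)) := htel _ _ (by omega)
      _ ≤ m * (1 - 1/m) := by
            apply mul_le_mul_of_nonneg_left _ hm'.le
            linarith [hle2 K hK3 (by omega), hnn (m+1) le_rfl]
      _ = m - 1 := by field_simp
  by_contra hcon
  push Not at hcon
  nlinarith

theorem xi_le (m : ℕ) (hm : 0 < m) :
    ∑ k ∈ Finset.range (m+1), (m.choose k : ℝ) * (((k:ℝ)/m)^k * (1 - (k:ℝ)/m)^(m-k))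
      ≤ 2 * Real.sqrt m := by
  have hm' : (0:ℝ) < m := by exact_mod_cast hm
  have h1 : ∀ k ∈ Finset.range (m+1), (m.choose k : ℝ) * (((k:ℝ)/m)^k * (1 - (k:ℝ)/m)^(m-k))
      = ((m.choose k : ℝ) * (k:ℝ)^k * ((m:ℝ) - k)^(m-k)) / (m:ℝ)^m := by
    intro k hk
    have hk' : k ≤ m := by have := Finset.mem_range.1 hk; omega
    have e : 1 - (k:ℝ)/m = ((m:ℝ) - k)/m := by field_simp
    have e2 : (m:ℝ)^m = (m:ℝ)^k * (m:ℝ)^(m-k) := by rw [← pow_add]; congr 1; omega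
    rw [e, div_pow, div_pow, e2]
    field_simp
  rw [Finset.sum_congr rfl h1, ← Finset.sum_div, abel_identity, Finset.sum_div]
  have h2 : ∀ k ∈ Finset.range (m+1), (m.descFactorial k : ℝ) * (m:ℝ)^(m-k) / (m:ℝ)^m
      = (m.descFactorial k : ℝ) / (m:ℝ)^k := by
    intro k hk
    have hk' : k ≤ m := by have := Finset.mem_range.1 hk; omega
    have e2 : (m:ℝ)^m = (m:ℝ)^k * (m:ℝ)^(m-k) := by rw [← pow_add]; congr 1; omega
    rw [e2]; field_simp
  rw [Finset.sum_congr rfl h2]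
  apply desc_sum_le m hm (fun k => (m.descFactorial k : ℝ) / (m:ℝ)^k) (by simp)
  intro k
  rw [Nat.descFactorial_succ]
  rcases le_total k m with h | h
  · push_cast [Nat.cast_sub h]
    field_simp
    ring
  · rcases h.eq_or_lt with h | h
    · subst h; simp [hm'.ne']
    · simp [Nat.descFactorial_of_lt h]

theorem convex_bernoulli {ι : Type*} [DecidableEq ι] (M : ℝ) (φ : ℝ → ℝ)
    (hφ : ConvexOn ℝ (Set.Icc 0 M) φ) (x : ι → ℝ) (hx : ∀ i, x i ∈ Set.Icc (0:ℝ) 1)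
    (s : Finset ι) : ∀ c : ℝ, 0 ≤ c → c + s.card ≤ M →
    φ (c + ∑ i ∈ s, x i) ≤ ∑ t ∈ s.powerset,
      (∏ i ∈ s, if i ∈ t then x i else 1 - x i) * φ (c + t.card) := by
  induction s using Finset.induction_on with
  | empty => intro c _ _; simp
  | insert a s ha ih =>
    intro c hc hcM
    rw [Finset.card_insert_of_notMem ha] at hcM
    push_cast at hcM
    have hxa := hx a
    have hxa0 := hxa.1
    have hxa1 := hxa.2
    rw [Finset.sum_insert ha, ← add_assoc]
    refine (ih (c + x a) (by linarith) (by linarith)).trans ?_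
    rw [Finset.sum_powerset_insert ha, ← Finset.sum_add_distrib]
    refine Finset.sum_le_sum fun t ht => ?_
    have hts : t ⊆ s := Finset.mem_powerset.1 ht
    have hat : a ∉ t := fun h => ha (hts h)
    rw [Finset.prod_insert ha, Finset.prod_insert ha, Finset.card_insert_of_notMem hat]
    have e : ∏ i ∈ s, (if i ∈ insert a t then x i else 1 - x i)
        = ∏ i ∈ s, (if i ∈ t then x i else 1 - x i) := by
      refine Finset.prod_congr rfl fun i hi => ?_
      have : i ≠ a := fun h => ha (h ▸ hi)
      simp [this]
    rw [e]
    simp only [hat, if_false, Finset.mem_insert_self, if_true]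
    have hw : 0 ≤ ∏ i ∈ s, (if i ∈ t then x i else 1 - x i) := by
      refine Finset.prod_nonneg fun i _ => ?_
      have := hx i
      split_ifs
      · exact this.1
      · linarith [this.2]
    have hcard : (t.card : ℝ) ≤ s.card := by exact_mod_cast Finset.card_le_card hts
    have hcard0 : (0:ℝ) ≤ t.card := by positivity
    have m1 : c + (t.card : ℝ) ∈ Set.Icc 0 M := ⟨by linarith, by linarith⟩
    have m2 : c + ((t.card : ℝ) + 1) ∈ Set.Icc 0 M := ⟨by linarith, by linarith⟩
    have hconv := hφ.2 m1 m2 (by linarith : 0 ≤ 1 - x a) hxa0 (by ring)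
    simp only [smul_eq_mul] at hconv
    have e2 : (1 - x a) * (c + t.card) + x a * (c + (t.card + 1)) = c + x a + t.card := by ring
    rw [e2] at hconv
    push_cast
    have := mul_le_mul_of_nonneg_left hconv hw
    linarith

theorem integral_bernoulli {Z : Type*} [MeasurableSpace Z] (m : ℕ) (D : Measure Z)
    [IsProbabilityMeasure D] (f : Z → ℝ) (hf : Measurable f) (hf01 : ∀ z, f z ∈ Set.Icc (0:ℝ) 1)
    (φ : ℝ → ℝ) (hφ : ConvexOn ℝ (Set.Icc 0 (m:ℝ)) φ) (hφ0 : ∀ x, 0 ≤ φ x) (C : ℝ)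
    (hC : ∑ k ∈ Finset.range (m+1), (m.choose k : ℝ) *
      (((∫ z, f z ∂D)^k * (1 - ∫ z, f z ∂D)^(m-k)) * φ k) ≤ C) :
    ∫⁻ S : Fin m → Z, ENNReal.ofReal (φ (∑ i, f (S i))) ∂(Measure.pi (fun _ : Fin m => D))
      ≤ ENNReal.ofReal C := by
  classical
  set p := ∫ z, f z ∂D with hp
  have hint : Integrable f D := Integrable.of_mem_Icc 0 1 hf.aemeasurable
    (Filter.Eventually.of_forall hf01)
  let g : Finset (Fin m) → Fin m → Z → ℝ := fun t i z => if i ∈ t then f z else 1 - f z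
  have hgi : ∀ t i, Integrable (g t i) D := by
    intro t i
    by_cases h : i ∈ t
    · simpa [g, h] using hint
    · have := (integrable_const (1:ℝ)).sub hint
      simp only [g, h, if_false]
      exact this
  have hgint : ∀ t i, ∫ z, g t i z ∂D = if i ∈ t then p else 1 - p := by
    intro t i
    by_cases h : i ∈ t
    · simp [g, h, hp]
    · simp only [g, h, if_false]
      rw [integral_sub (integrable_const _) hint]
      simp [hp]
  have hpi : ∀ t, Integrable (fun S : Fin m → Z => (∏ i, g t i (S i)) * φ (t.card))
      (Measure.pi (fun _ : Fin m => D)) := fun t =>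
    (Integrable.fintype_prod (f := g t) (hgi t)).mul_const _
  have hpt : ∀ S : Fin m → Z, φ (∑ i, f (S i)) ≤
      ∑ t ∈ (Finset.univ : Finset (Fin m)).powerset, (∏ i, g t i (S i)) * φ (t.card) := by
    intro S
    have := convex_bernoulli (m:ℝ) φ hφ (fun i => f (S i)) (fun i => hf01 _) Finset.univ 0 le_rfl
      (by simp)
    simpa [g] using this
  calc _ ≤ ∫⁻ S : Fin m → Z, ENNReal.ofReal (∑ t ∈ (Finset.univ : Finset (Fin m)).powerset,
              (∏ i, g t i (S i)) * φ (t.card)) ∂(Measure.pi (fun _ : Fin m => D)) :=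
        lintegral_mono fun S => ENNReal.ofReal_le_ofReal (hpt S)
    _ = ENNReal.ofReal (∫ S : Fin m → Z, (∑ t ∈ (Finset.univ : Finset (Fin m)).powerset,
              (∏ i, g t i (S i)) * φ (t.card)) ∂(Measure.pi (fun _ : Fin m => D))) := by
        rw [ofReal_integral_eq_lintegral_ofReal]
        · exact integrable_finsetSum _ fun t _ => hpi t
        · exact Filter.Eventually.of_forall fun S => (hφ0 _).trans (hpt S)
    _ ≤ ENNReal.ofReal C := by
        apply ENNReal.ofReal_le_ofReal
        refine le_trans (le_of_eq ?_) hC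
        rw [integral_finsetSum _ fun t _ => hpi t]
        have h1 : ∀ t ∈ (Finset.univ : Finset (Fin m)).powerset,
            ∫ S : Fin m → Z, (∏ i, g t i (S i)) * φ (t.card) ∂(Measure.pi (fun _ : Fin m => D))
            = (fun k : ℕ => (p^k * (1-p)^(m-k)) * φ k) t.card := by
          intro t _
          rw [integral_mul_const, integral_fintype_prod_eq_prod]
          simp only [hgint]
          rw [Finset.prod_ite]
          simp [Finset.filter_not, ← Finset.compl_eq_univ_sdiff, Finset.card_compl]
        rw [Finset.sum_congr rfl h1,
          Finset.sum_powerset_apply_card (fun k : ℕ => (p^k * (1-p)^(m-k)) * φ k)]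
        simp

theorem pinsker_aux (q p : ℝ) (hq : 0 ≤ q) (hqp : q ≤ p) (hp : p < 1) :
    2 * (q - p)^2 ≤ binKL q p := by
  rcases hqp.eq_or_lt with rfl | hlt
  · have h1 : (1 - q) ≠ 0 := by linarith
    rcases hq.eq_or_lt with rfl | h0
    · simp [binKL]
    · simp [binKL, h1, h0.ne']
  have hp0 : 0 < p := by linarith
  let g : ℝ → ℝ := fun x => -q * Real.log x - (1-q) * Real.log (1-x) - 2 * (x-q)^2
  have hcont : ContinuousOn g (Set.Icc q p) := by
    have c1 : ContinuousOn (fun x : ℝ => -q * Real.log x) (Set.Icc q p) := by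
      rcases hq.eq_or_lt with rfl | h0
      · simpa using continuousOn_const
      · exact continuousOn_const.mul (Real.continuousOn_log.mono fun x hx => by
          have := hx.1; simp; linarith)
    have c2 : ContinuousOn (fun x : ℝ => (1-q) * Real.log (1-x)) (Set.Icc q p) :=
      continuousOn_const.mul (ContinuousOn.log (by fun_prop) fun x hx => by
        have := hx.2; linarith)
    exact (c1.sub c2).sub (by fun_prop)
  have hmono : MonotoneOn g (Set.Icc q p) := by
    have hder : ∀ x ∈ interior (Set.Icc q p), HasDerivAt g
        (-q * x⁻¹ - (1-q) * ((-1) / (1-x)) - 2 * (2 * (x - q))) x := by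
      intro x hx
      rw [interior_Icc] at hx
      have hx0 : x ≠ 0 := by have := hx.1; linarith
      have hx1 : 1 - x ≠ 0 := by have := hx.2; linarith
      have d1 := (Real.hasDerivAt_log hx0).const_mul (-q)
      have d2 := (((hasDerivAt_id x).const_sub 1).log hx1).const_mul (1-q)
      have d3 := (((hasDerivAt_id x).sub_const q).fun_pow 2).const_mul 2
      have := (d1.sub d2).sub d3
      have e : -q * x⁻¹ - (1-q) * ((-1) / (1-x)) - 2 * (2 * (x - q)) =
          -q * x⁻¹ - (1 - q) * (-1 / (1 - id x)) -
            2 * (((2:ℕ):ℝ) * (id x - q) ^ (2 - 1) * 1) := by simp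
      rw [e]
      exact this
    refine monotoneOn_of_deriv_nonneg (convex_Icc q p) hcont
      (fun x hx => (hder x hx).differentiableAt.differentiableWithinAt) ?_
    intro x hx
    rw [(hder x hx).deriv]
    rw [interior_Icc] at hx
    have hx0 : 0 < x := by have := hx.1; linarith
    have hx1 : 0 < 1 - x := by have := hx.2; linarith
    have e : -q * x⁻¹ - (1-q) * ((-1) / (1-x)) - 2 * (2 * (x - q))
        = (x - q) * (1 - 2*x)^2 / (x * (1-x)) := by
      field_simp
      ring
    rw [e]
    have := hx.1
    apply div_nonneg _ (by positivity)
    exact mul_nonneg (by linarith) (sq_nonneg _)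
  have := hmono (Set.left_mem_Icc.2 hqp) (Set.right_mem_Icc.2 hqp) hqp
  simp only [g, sub_self] at this
  have hk : binKL q p = (-q * Real.log p - (1-q) * Real.log (1-p)) -
      (-q * Real.log q - (1-q) * Real.log (1-q)) := by
    unfold binKL
    rw [Real.log_div (by linarith) (by linarith : (1-p) ≠ 0)]
    rcases hq.eq_or_lt with rfl | h0
    · simp
    · rw [Real.log_div h0.ne' hp0.ne']; ring
  rw [hk]
  nlinarith

theorem binKL_symm (q p : ℝ) : binKL (1-q) (1-p) = binKL q p := by
  unfold binKL
  simp only [sub_sub_cancel]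
  ring

theorem pinsker (q p : ℝ) (hq : q ∈ Set.Icc (0:ℝ) 1) (hp : p ∈ Set.Ioo (0:ℝ) 1) :
    2 * (q - p)^2 ≤ binKL q p := by
  obtain ⟨h0, h1⟩ := hq
  obtain ⟨p0, p1⟩ := hp
  rcases le_total q p with h | h
  · exact pinsker_aux q p h0 h p1
  · have := pinsker_aux (1-q) (1-p) (by linarith) (by linarith) (by linarith)
    rw [binKL_symm] at this
    nlinarith

theorem binKL_expand (q p : ℝ) (hp : p ∈ Set.Ioo (0:ℝ) 1) :
    binKL q p = q * Real.log q + (1-q) * Real.log (1-q)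
      + (q * (-Real.log p) + (1-q) * (-Real.log (1-p))) := by
  obtain ⟨p0, p1⟩ := hp
  have a : q * Real.log (q/p) = q * Real.log q - q * Real.log p := by
    by_cases h : q = 0
    · simp [h]
    · rw [Real.log_div h p0.ne']; ring
  have b : (1-q) * Real.log ((1-q)/(1-p)) = (1-q) * Real.log (1-q) - (1-q) * Real.log (1-p) := by
    by_cases h : 1 - q = 0
    · simp [h]
    · rw [Real.log_div h (by linarith)]; ring
  unfold binKL
  rw [a, b]; ring

theorem binKL_convex (p : ℝ) (hp : p ∈ Set.Ioo (0:ℝ) 1) :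
    ConvexOn ℝ (Set.Icc (0:ℝ) 1) (fun q => binKL q p) := by
  have h1 : ConvexOn ℝ (Set.Icc (0:ℝ) 1) (fun q : ℝ => q * Real.log q) :=
    Real.convexOn_mul_log.subset (fun x hx => hx.1) (convex_Icc 0 1)
  simp only [binKL_expand _ p hp]
  refine ⟨convex_Icc 0 1, ?_⟩
  intro x hx y hy a b ha hb hab
  have i1 := h1.2 hx hy ha hb hab
  have mx : 1 - x ∈ Set.Icc (0:ℝ) 1 := ⟨by linarith [hx.2], by linarith [hx.1]⟩
  have my : 1 - y ∈ Set.Icc (0:ℝ) 1 := ⟨by linarith [hy.2], by linarith [hy.1]⟩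
  have i2 := h1.2 mx my ha hb hab
  simp only [smul_eq_mul] at *
  have e : a * (1 - x) + b * (1 - y) = 1 - (a * x + b * y) := by linear_combination hab
  rw [e] at i2
  have hb' : b = 1 - a := by linarith
  subst hb'
  linarith

theorem exp_convex_scaled (m : ℕ) (hm : 0 < m) (f : ℝ → ℝ)
    (hf : ConvexOn ℝ (Set.Icc (0:ℝ) 1) f) :
    ConvexOn ℝ (Set.Icc (0:ℝ) m) (fun x => Real.exp (m * f (x / m))) := by
  have hm' : (0:ℝ) < m := by exact_mod_cast hm
  refine ⟨convex_Icc _ _, ?_⟩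
  intro x hx y hy a b ha hb hab
  have hx' : x / m ∈ Set.Icc (0:ℝ) 1 := ⟨div_nonneg hx.1 hm'.le, (div_le_one hm').2 hx.2⟩
  have hy' : y / m ∈ Set.Icc (0:ℝ) 1 := ⟨div_nonneg hy.1 hm'.le, (div_le_one hm').2 hy.2⟩
  have h := hf.2 hx' hy' ha hb hab
  have h2 := convexOn_exp.2 (Set.mem_univ (m * f (x/m))) (Set.mem_univ (m * f (y/m))) ha hb hab
  simp only [smul_eq_mul] at *
  refine le_trans (Real.exp_le_exp.2 ?_) h2
  have e : (a * x + b * y) / m = a * (x/m) + b * (y/m) := by ring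
  rw [e]
  calc _ ≤ m * (a * f (x/m) + b * f (y/m)) := mul_le_mul_of_nonneg_left h hm'.le
    _ = _ := by ring

theorem term_eq (m k : ℕ) (hm : 0 < m) (hk : k ≤ m) (p : ℝ) (hp : p ∈ Set.Ioo (0:ℝ) 1) :
    (p^k * (1-p)^(m-k)) * Real.exp (m * binKL ((k:ℝ)/m) p)
      = ((k:ℝ)/m)^k * (1 - (k:ℝ)/m)^(m-k) := by
  have hm' : (0:ℝ) < m := by exact_mod_cast hm
  have key : ∀ (n : ℕ) (x y : ℝ), 0 ≤ x → 0 < y → x = n / m →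
      y^n * Real.exp (m * (x * Real.log (x / y))) = x^n := by
    intro n x y hx hy hxn
    rcases Nat.eq_zero_or_pos n with rfl | hn
    · simp at hxn; simp [hxn]
    · have hx : 0 < x := by rw [hxn]; positivity
      have e : m * (x * Real.log (x / y)) = n * Real.log (x/y) := by
        rw [← mul_assoc]; congr 1; rw [hxn]; field_simp
      rw [e, Real.exp_nat_mul, Real.exp_log (by positivity), ← mul_pow]
      congr 1
      field_simp
  have hkm : (k:ℝ) ≤ m := by exact_mod_cast hk
  have h1 := key k (k/m) p (by positivity) hp.1 rfl
  have h2 := key (m-k) (1 - k/m) (1-p) (by rw [sub_nonneg, div_le_one hm']; exact hkm)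
    (by linarith [hp.2]) (by rw [Nat.cast_sub hk]; field_simp)
  rw [← h1, ← h2]
  unfold binKL
  rw [mul_add, Real.exp_add]
  ring

theorem kl_mgf {Z : Type*} [MeasurableSpace Z] (m : ℕ) (hm : 0 < m) (D : Measure Z)
    [IsProbabilityMeasure D] (f : Z → ℝ) (hf : Measurable f)
    (hf01 : ∀ z, f z ∈ Set.Icc (0:ℝ) 1) :
    ∫⁻ S : Fin m → Z, ENNReal.ofReal
      (Real.exp (m * binKL ((∑ i, f (S i)) / m) (∫ z, f z ∂D)))
        ∂(Measure.pi (fun _ : Fin m => D)) ≤ ENNReal.ofReal (2 * Real.sqrt m) := by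
  have hm' : (0:ℝ) < m := by exact_mod_cast hm
  have hint : Integrable f D := Integrable.of_mem_Icc 0 1 hf.aemeasurable
    (Filter.Eventually.of_forall hf01)
  obtain ⟨p, hp⟩ : ∃ p, p = ∫ z, f z ∂D := ⟨_, rfl⟩
  have hp0 : 0 ≤ p := hp ▸ integral_nonneg fun z => (hf01 z).1
  have hp1 : p ≤ 1 := by
    have := integral_mono hint (integrable_const (1:ℝ)) fun z => (hf01 z).2
    simpa [← hp] using this
  by_cases hpi : p ∈ Set.Ioo (0:ℝ) 1
  · refine integral_bernoulli m D f hf hf01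
      (fun x => Real.exp (m * binKL (x / m) (∫ z, f z ∂D)))
      (exp_convex_scaled m hm _ (binKL_convex _ (hp ▸ hpi))) (fun x => (Real.exp_pos _).le) _ ?_
    refine le_trans (le_of_eq ?_) (xi_le m hm)
    refine Finset.sum_congr rfl fun k hk => ?_
    rw [term_eq m k hm (by have := Finset.mem_range.1 hk; omega) _ (hp ▸ hpi)]
  · have hle : ∀ S : Fin m → Z, ENNReal.ofReal
        (Real.exp (m * binKL ((∑ i, f (S i)) / m) (∫ z, f z ∂D))) ≤
          ENNReal.ofReal (2 * Real.sqrt m) := by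
      intro S
      apply ENNReal.ofReal_le_ofReal
      have hq0 : 0 ≤ (∑ i, f (S i)) / m :=
        div_nonneg (Finset.sum_nonneg fun i _ => (hf01 _).1) hm'.le
      have hq1 : (∑ i, f (S i)) / m ≤ 1 := by
        rw [div_le_one hm']
        calc _ ≤ ∑ i : Fin m, (1:ℝ) := Finset.sum_le_sum fun i _ => (hf01 _).2
          _ = m := by simp
      have hs : 1 ≤ Real.sqrt m := by
        rw [Real.one_le_sqrt]; exact_mod_cast hm
      have hk : binKL ((∑ i, f (S i)) / m) (∫ z, f z ∂D) ≤ 0 := by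
        rw [← hp]
        generalize (∑ i, f (S i)) / m = q at *
        have : p = 0 ∨ p = 1 := by
          rcases hp0.eq_or_lt with h | h
          · exact Or.inl h.symm
          · rcases hp1.eq_or_lt with h' | h'
            · exact Or.inr h'
            · exact absurd ⟨h, h'⟩ hpi
        rcases this with h | h
        · simp only [h, binKL, div_zero, Real.log_zero, mul_zero, sub_zero, div_one, zero_add]
          exact mul_nonpos_of_nonneg_of_nonpos (by linarith)
            (Real.log_nonpos (by linarith) (by linarith))
        · simp only [h, binKL, div_zero, Real.log_zero, mul_zero, sub_self, div_one, add_zero]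
          exact mul_nonpos_of_nonneg_of_nonpos hq0 (Real.log_nonpos hq0 hq1)
      have : Real.exp (m * binKL ((∑ i, f (S i)) / m) (∫ z, f z ∂D)) ≤ 1 :=
        Real.exp_le_one_iff.2 (mul_nonpos_of_nonneg_of_nonpos hm'.le hk)
      linarith
    refine (lintegral_mono hle).trans ?_
    simp

theorem sq_convex (p : ℝ) : ConvexOn ℝ (Set.Icc (0:ℝ) 1) (fun q => 2 * (q - p)^2) := by
  refine ⟨convex_Icc 0 1, ?_⟩
  intro x _ y _ a b ha hb hab
  have hb' : b = 1 - a := by linarith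
  subst hb'
  simp only [smul_eq_mul]
  nlinarith [mul_nonneg (mul_nonneg ha hb) (sq_nonneg (x - y))]

theorem sq_mgf {Z : Type*} [MeasurableSpace Z] (m : ℕ) (hm : 0 < m) (D : Measure Z)
    [IsProbabilityMeasure D] (f : Z → ℝ) (hf : Measurable f)
    (hf01 : ∀ z, f z ∈ Set.Icc (0:ℝ) 1) :
    ∫⁻ S : Fin m → Z, ENNReal.ofReal
      (Real.exp (m * (2 * ((∑ i, f (S i)) / m - (∫ z, f z ∂D))^2)))
        ∂(Measure.pi (fun _ : Fin m => D)) ≤ ENNReal.ofReal (2 * Real.sqrt m) := by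
  have hm' : (0:ℝ) < m := by exact_mod_cast hm
  have hint : Integrable f D := Integrable.of_mem_Icc 0 1 hf.aemeasurable
    (Filter.Eventually.of_forall hf01)
  obtain ⟨p, hp⟩ : ∃ p, p = ∫ z, f z ∂D := ⟨_, rfl⟩
  have hp0 : 0 ≤ p := hp ▸ integral_nonneg fun z => (hf01 z).1
  have hp1 : p ≤ 1 := by
    have := integral_mono hint (integrable_const (1:ℝ)) fun z => (hf01 z).2
    simpa [← hp] using this
  refine integral_bernoulli m D f hf hf01
      (fun x => Real.exp (m * (2 * (x / m - (∫ z, f z ∂D))^2)))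
      (exp_convex_scaled m hm _ (sq_convex _)) (fun x => (Real.exp_pos _).le) _ ?_
  refine le_trans ?_ (xi_le m hm)
  refine Finset.sum_le_sum fun k hk => ?_
  apply mul_le_mul_of_nonneg_left _ (by positivity)
  rw [← hp]
  have hkm : k ≤ m := by have := Finset.mem_range.1 hk; omega
  have hkm' : (k:ℝ) ≤ m := by exact_mod_cast hkm
  have hq0 : 0 ≤ (k:ℝ) / m := by positivity
  have hq1 : (k:ℝ) / m ≤ 1 := (div_le_one hm').2 hkm'
  have hR : 0 ≤ ((k:ℝ)/m)^k * (1 - (k:ℝ)/m)^(m-k) :=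
    mul_nonneg (by positivity) (pow_nonneg (by linarith) _)
  rcases hp0.eq_or_lt with h | h
  · rw [← h] at *
    rcases Nat.eq_zero_or_pos k with rfl | hk0
    · simp
    · rw [zero_pow hk0.ne']; simpa using hR
  rcases hp1.eq_or_lt with h' | h'
  · rw [h'] at *
    rcases hkm.eq_or_lt with rfl | hlt
    · simp [hm'.ne']
    · rw [sub_self, zero_pow (by omega)]; simpa using hR
  rw [← term_eq m k hm hkm p ⟨h, h'⟩]
  apply mul_le_mul_of_nonneg_left _
    (mul_nonneg (by positivity) (pow_nonneg (by linarith) _))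
  exact Real.exp_le_exp.2 (mul_le_mul_of_nonneg_left (pinsker _ _ ⟨hq0, hq1⟩ ⟨h, h'⟩) hm'.le)

theorem disintegrated_general
    {Z H : Type*} [MeasurableSpace Z] [MeasurableSpace H]
    (m : ℕ) (hm : 0 < m)
    (D : Measure Z) [IsProbabilityMeasure D]
    (lam : Measure H)
    (P : H → ℝ) (hPpos : ∀ h, 0 < P h) (hPmeas : Measurable P)
    (Pm : Measure H) [IsProbabilityMeasure Pm]
    (hPm : Pm = lam.withDensity fun h => ENNReal.ofReal (P h))
    (Q : (Fin m → Z) → H → ℝ) (hQpos : ∀ S h, 0 < Q S h)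
    (κ : Kernel (Fin m → Z) H) [IsMarkovKernel κ]
    (hκ : ∀ S, κ S = lam.withDensity fun h => ENNReal.ofReal (Q S h))
    (δ : ℝ) (hδ : δ ∈ Set.Ioc (0:ℝ) 1)
    (B : (Fin m → Z) × H → ℝ) (hB : Measurable B)
    (hmgf : ∀ h, ∫⁻ S, ENNReal.ofReal (Real.exp (m * B (S, h)))
      ∂(Measure.pi (fun _ : Fin m => D)) ≤ ENNReal.ofReal (2 * Real.sqrt m)) :
    1 - ENNReal.ofReal δ ≤
      (Measure.pi (fun _ : Fin m => D) ⊗ₘ κ)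
        {p : (Fin m → Z) × H | B p ≤
            (1/m) * (max (Real.log (Q p.1 p.2 / P p.2)) 0
              + Real.log (2 * Real.sqrt m / δ)) } := by
  obtain ⟨hδ0, hδ1⟩ := hδ
  have hm' : (0:ℝ) < m := by exact_mod_cast hm
  have hsm : 0 < Real.sqrt m := Real.sqrt_pos.2 hm'
  set A := {p : (Fin m → Z) × H | B p ≤
            (1/m) * (max (Real.log (Q p.1 p.2 / P p.2)) 0
              + Real.log (2 * Real.sqrt m / δ)) } with hA
  set μ := Measure.pi (fun _ : Fin m => D) ⊗ₘ κ with hμ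
  set c : ℝ := δ / (2 * Real.sqrt m) with hc
  have hc0 : 0 < c := by positivity
  let W : (Fin m → Z) → H → ENNReal := fun S h =>
    ENNReal.ofReal (Real.exp (m * B (S, h))) * ENNReal.ofReal c
  have hWm : Measurable (Function.uncurry W) := by
    have : Measurable fun x : (Fin m → Z) × H =>
        ENNReal.ofReal (Real.exp (m * B x)) * ENNReal.ofReal c := by fun_prop
    exact this
  have hbad : ∀ S h, (S, h) ∉ A → ENNReal.ofReal (Q S h) ≤ ENNReal.ofReal (P h) * W S h := by
    intro S h hn
    simp only [hA, Set.mem_setOf_eq, not_le] at hn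
    simp only [W]
    rw [← ENNReal.ofReal_mul (Real.exp_pos _).le, ← ENNReal.ofReal_mul (hPpos h).le]
    apply ENNReal.ofReal_le_ofReal
    have hq := hQpos S h
    have hp := hPpos h
    have h1 : Real.log (Q S h / P h) + Real.log (2 * Real.sqrt m / δ) < m * B (S, h) := by
      have h2 := mul_lt_mul_of_pos_left hn hm'
      rw [← mul_assoc, mul_one_div_cancel hm'.ne', one_mul] at h2
      linarith [le_max_left (Real.log (Q S h / P h)) 0]
    rw [← Real.log_mul (by positivity) (by positivity)] at h1
    have h3 := (Real.log_lt_iff_lt_exp (by positivity)).1 h1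
    have h4 : Q S h = P h * ((Q S h / P h * (2 * Real.sqrt m / δ)) * c) := by
      rw [hc]; field_simp
    rw [h4]
    gcongr
  set C := (toMeasurable μ A)ᶜ with hC
  have hCm : MeasurableSet C := (measurableSet_toMeasurable μ A).compl
  have hCA : ∀ x ∈ C, x ∉ A := fun x hx hxA => hx (subset_toMeasurable μ A hxA)
  have hCδ : μ C ≤ ENNReal.ofReal δ := by
    rw [hμ, Measure.compProd_apply hCm]
    calc _ ≤ ∫⁻ S, ∫⁻ h, W S h ∂Pm ∂(Measure.pi (fun _ : Fin m => D)) := by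
          refine lintegral_mono fun S => ?_
          have hCS : MeasurableSet (Prod.mk S ⁻¹' C) := measurable_prodMk_left hCm
          rw [hκ, withDensity_apply _ hCS, hPm, lintegral_withDensity_eq_lintegral_mul _
            (by fun_prop) (hWm.of_uncurry_left)]
          calc _ ≤ ∫⁻ h in Prod.mk S ⁻¹' C, ENNReal.ofReal (P h) * W S h ∂lam :=
                setLIntegral_mono' hCS fun h hh => hbad S h (hCA _ hh)
            _ ≤ _ := setLIntegral_le_lintegral _ _
      _ = ∫⁻ h, ∫⁻ S, W S h ∂(Measure.pi (fun _ : Fin m => D)) ∂Pm :=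
          lintegral_lintegral_swap hWm.aemeasurable
      _ ≤ ∫⁻ h, ENNReal.ofReal δ ∂Pm := by
          refine lintegral_mono fun h => ?_
          simp only [W]
          rw [lintegral_mul_const' _ _ ENNReal.ofReal_ne_top]
          calc _ ≤ ENNReal.ofReal (2 * Real.sqrt m) * ENNReal.ofReal c := by gcongr; exact hmgf h
            _ = ENNReal.ofReal δ := by
              rw [← ENNReal.ofReal_mul (by positivity)]
              congr 1
              rw [hc]; field_simp
      _ = ENNReal.ofReal δ := by simp
  rw [← measure_toMeasurable A]
  have h1 := measure_add_measure_compl (μ := μ) (measurableSet_toMeasurable μ A)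
  rw [measure_univ] at h1
  rw [tsub_le_iff_right, ← h1]
  gcongr

/-- **Disintegrated kl and McAllester-type bounds with the positive-part log
ratio.**  Each of the following holds with probability at least `1−δ` over
`S ∼ D^m` and `h ∼ Q_S`:
(i)  `kl(R_S^ℓ(h) ‖ R_D^ℓ(h)) ≤ (1/m)·[ln₊(Q_S(h)/P(h)) + ln(2√m/δ)]`;
(ii) `|R_S^ℓ(h) − R_D^ℓ(h)| ≤ √((1/(2m))·[ln₊(Q_S(h)/P(h)) + ln(2√m/δ)])`. -/
theorem disintegrated_kl_and_mcallester_bounds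
    {Z H : Type*} [MeasurableSpace Z] [MeasurableSpace H]
    (m : ℕ) (hm : 0 < m)
    (D : Measure Z) [IsProbabilityMeasure D]
    (lam : Measure H) [SigmaFinite lam]
    (ℓ : H → Z → ℝ) (hℓ : Measurable (Function.uncurry ℓ))
    (hℓ01 : ∀ h z, ℓ h z ∈ Set.Icc (0:ℝ) 1)
    (P : H → ℝ) (hPpos : ∀ h, 0 < P h) (hPmeas : Measurable P)
    (Pm : Measure H) [IsProbabilityMeasure Pm]
    (hPm : Pm = lam.withDensity fun h => ENNReal.ofReal (P h))
    (Q : (Fin m → Z) → H → ℝ) (hQpos : ∀ S h, 0 < Q S h)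
    (κ : Kernel (Fin m → Z) H) [IsMarkovKernel κ]
    (hκ : ∀ S, κ S = lam.withDensity fun h => ENNReal.ofReal (Q S h))
    (δ : ℝ) (hδ : δ ∈ Set.Ioc (0:ℝ) 1) :
    (1 - ENNReal.ofReal δ ≤
      (Measure.pi (fun _ : Fin m => D) ⊗ₘ κ)
        {p : (Fin m → Z) × H |
          binKL (empRisk ℓ p.2 p.1) (trueRisk D ℓ p.2) ≤
            (1/m) * (max (Real.log (Q p.1 p.2 / P p.2)) 0
              + Real.log (2 * Real.sqrt m / δ)) })
    ∧
    (1 - ENNReal.ofReal δ ≤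
      (Measure.pi (fun _ : Fin m => D) ⊗ₘ κ)
        {p : (Fin m → Z) × H |
          |empRisk ℓ p.2 p.1 - trueRisk D ℓ p.2| ≤
            Real.sqrt ((1/(2*m)) * (max (Real.log (Q p.1 p.2 / P p.2)) 0
              + Real.log (2 * Real.sqrt m / δ))) }) := by
  have hm' : (0:ℝ) < m := by exact_mod_cast hm
  have hR : Measurable fun h => trueRisk D ℓ h := by
    have := (hℓ.stronglyMeasurable.integral_prod_right (ν := D)).measurable
    exact this
  have hE : Measurable fun p : (Fin m → Z) × H => empRisk ℓ p.2 p.1 := by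
    unfold empRisk
    refine Measurable.div_const (Finset.measurable_sum _ fun i _ => ?_) _
    exact hℓ.comp (measurable_snd.prodMk ((measurable_pi_apply i).comp measurable_fst))
  have hR' : Measurable fun p : (Fin m → Z) × H => trueRisk D ℓ p.2 := hR.comp measurable_snd
  have hℓh : ∀ h, Measurable (ℓ h) := fun h => hℓ.of_uncurry_left
  constructor
  · refine disintegrated_general m hm D lam P hPpos hPmeas Pm hPm Q hQpos κ hκ δ hδ
      (fun p => binKL (empRisk ℓ p.2 p.1) (trueRisk D ℓ p.2)) ?_ ?_
    · unfold binKL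
      fun_prop
    · intro h
      exact kl_mgf m hm D (ℓ h) (hℓh h) (hℓ01 h)
  · refine (disintegrated_general m hm D lam P hPpos hPmeas Pm hPm Q hQpos κ hκ δ hδ
      (fun p => 2 * (empRisk ℓ p.2 p.1 - trueRisk D ℓ p.2)^2) ?_ ?_).trans (measure_mono ?_)
    · fun_prop
    · intro h
      exact sq_mgf m hm D (ℓ h) (hℓh h) (hℓ01 h)
    · intro p hp
      simp only [Set.mem_setOf_eq] at hp ⊢
      apply Real.abs_le_sqrt
      have e : ∀ X : ℝ, 1 / (2 * (m:ℝ)) * X = (1 / m * X) / 2 := by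
        intro X; field_simp
      rw [e]
      linarith
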